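/- If χ = (P,Q,R) is a vector field on 𝕋² with deg P, deg Q, deg R ≤ 2, then there exist α ∈ ℝ and f ∈ ℝ[x,y,z] with deg f ≤ 1 such that P = (α/4)xz + f·y, Q = (α/4)yz − f·x, and R = (α/2)(−a²(x²+y²)+z²+a⁴−1). -/

import Mathlib

open MvPolynomial

/-- Derivative of `g` along the polynomial vector field `(P, Q, R)` in `ℝ[x,y,z]`. -/
noncomputable def vf (P Q R g : MvPolynomial (Fin 3) ℝ) : MvPolynomial (Fin 3) ℝ :=
  P * pderiv 0 g + Q * pderiv 1 g + R * pderiv 2 g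

/-- The defining polynomial `F = (x²+y²-a²)² + z² - 1` of the torus `𝕋²`. -/
noncomputable def torusF (a : ℝ) : MvPolynomial (Fin 3) ℝ :=
  (X 0 ^ 2 + X 1 ^ 2 - C (a ^ 2)) ^ 2 + X 2 ^ 2 - 1

/-- `(P, Q, R)` is a polynomial vector field on the torus `𝕋²`. -/
def IsVFOnTorus (a : ℝ) (P Q R : MvPolynomial (Fin 3) ℝ) : Prop :=
  ∃ K : MvPolynomial (Fin 3) ℝ, vf P Q R (torusF a) = K * torusF a


lemma mono_form (m : Fin 3 →₀ ℕ) (c : ℝ) :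
    monomial m c = C c * X 0 ^ m 0 * X 1 ^ m 1 * X 2 ^ m 2 := by
  rw [monomial_eq, Finsupp.prod_fintype _ _ (by simp), Fin.prod_univ_three]
  ring

lemma deg_le {p : MvPolynomial (Fin 3) ℝ} {n : ℕ} (hp : p.totalDegree ≤ n)
    {m : Fin 3 →₀ ℕ} (hm : m ∈ p.support) : m 0 + m 1 + m 2 ≤ n := by
  have h := (le_totalDegree hm).trans hp
  rw [Finsupp.sum_fintype _ _ (by simp), Fin.sum_univ_three] at h
  exact h

lemma form_one (p : MvPolynomial (Fin 3) ℝ) (hp : p.totalDegree ≤ 1) :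
    ∃ c0 c1 c2 c3 : ℝ, p = C c0 + C c1 * X 0 + C c2 * X 1 + C c3 * X 2 := by
  rw [p.as_sum]
  refine Finset.sum_induction _ (fun p : MvPolynomial (Fin 3) ℝ =>
    ∃ c0 c1 c2 c3 : ℝ, p = C c0 + C c1 * X 0 + C c2 * X 1 + C c3 * X 2) ?_ ?_ ?_
  · rintro _ _ ⟨a0, a1, a2, a3, rfl⟩ ⟨b0, b1, b2, b3, rfl⟩
    refine ⟨a0 + b0, a1 + b1, a2 + b2, a3 + b3, ?_⟩
    simp only [C_add]
    ring
  · exact ⟨0, 0, 0, 0, by simp⟩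
  · intro m hm
    have h := deg_le hp hm
    rw [mono_form]
    generalize coeff m p = c
    generalize m 0 = i at *
    generalize m 1 = j at *
    generalize m 2 = k at *
    have h' : (i = 0 ∧ j = 0 ∧ k = 0) ∨ (i = 1 ∧ j = 0 ∧ k = 0) ∨ (i = 0 ∧ j = 1 ∧ k = 0) ∨
      (i = 0 ∧ j = 0 ∧ k = 1) := by omega
    rcases h' with ⟨rfl, rfl, rfl⟩ | ⟨rfl, rfl, rfl⟩ | ⟨rfl, rfl, rfl⟩ | ⟨rfl, rfl, rfl⟩
    · exact ⟨c, 0, 0, 0, by simp⟩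
    · exact ⟨0, c, 0, 0, by simp⟩
    · exact ⟨0, 0, c, 0, by simp⟩
    · exact ⟨0, 0, 0, c, by simp⟩

/-- The general quadratic polynomial. -/
noncomputable def quad (c0 c1 c2 c3 c4 c5 c6 c7 c8 c9 : ℝ) : MvPolynomial (Fin 3) ℝ :=
  C c0 + C c1 * X 0 + C c2 * X 1 + C c3 * X 2 + C c4 * X 0 ^ 2 + C c5 * (X 0 * X 1)
    + C c6 * X 1 ^ 2 + C c7 * (X 0 * X 2) + C c8 * (X 1 * X 2) + C c9 * X 2 ^ 2

lemma form_two (p : MvPolynomial (Fin 3) ℝ) (hp : p.totalDegree ≤ 2) :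
    ∃ c0 c1 c2 c3 c4 c5 c6 c7 c8 c9 : ℝ, p = quad c0 c1 c2 c3 c4 c5 c6 c7 c8 c9 := by
  rw [p.as_sum]
  refine Finset.sum_induction _ (fun p : MvPolynomial (Fin 3) ℝ =>
    ∃ c0 c1 c2 c3 c4 c5 c6 c7 c8 c9 : ℝ, p = quad c0 c1 c2 c3 c4 c5 c6 c7 c8 c9) ?_ ?_ ?_
  · rintro _ _ ⟨a0, a1, a2, a3, a4, a5, a6, a7, a8, a9, rfl⟩
      ⟨b0, b1, b2, b3, b4, b5, b6, b7, b8, b9, rfl⟩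
    refine ⟨a0 + b0, a1 + b1, a2 + b2, a3 + b3, a4 + b4, a5 + b5, a6 + b6, a7 + b7, a8 + b8,
      a9 + b9, ?_⟩
    simp only [quad, C_add]
    ring
  · exact ⟨0, 0, 0, 0, 0, 0, 0, 0, 0, 0, by simp [quad]⟩
  · intro m hm
    have h := deg_le hp hm
    rw [mono_form]
    generalize coeff m p = c
    generalize m 0 = i at *
    generalize m 1 = j at *
    generalize m 2 = k at *
    have h' : (i = 0 ∧ j = 0 ∧ k = 0) ∨ (i = 1 ∧ j = 0 ∧ k = 0) ∨ (i = 0 ∧ j = 1 ∧ k = 0) ∨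
      (i = 0 ∧ j = 0 ∧ k = 1) ∨ (i = 2 ∧ j = 0 ∧ k = 0) ∨ (i = 1 ∧ j = 1 ∧ k = 0) ∨
      (i = 0 ∧ j = 2 ∧ k = 0) ∨ (i = 1 ∧ j = 0 ∧ k = 1) ∨ (i = 0 ∧ j = 1 ∧ k = 1) ∨
      (i = 0 ∧ j = 0 ∧ k = 2) := by omega
    rcases h' with ⟨rfl, rfl, rfl⟩ | ⟨rfl, rfl, rfl⟩ | ⟨rfl, rfl, rfl⟩ | ⟨rfl, rfl, rfl⟩ |
      ⟨rfl, rfl, rfl⟩ | ⟨rfl, rfl, rfl⟩ | ⟨rfl, rfl, rfl⟩ | ⟨rfl, rfl, rfl⟩ |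
      ⟨rfl, rfl, rfl⟩ | ⟨rfl, rfl, rfl⟩
    · exact ⟨c, 0, 0, 0, 0, 0, 0, 0, 0, 0, by simp [quad]⟩
    · exact ⟨0, c, 0, 0, 0, 0, 0, 0, 0, 0, by simp [quad]⟩
    · exact ⟨0, 0, c, 0, 0, 0, 0, 0, 0, 0, by simp [quad]⟩
    · exact ⟨0, 0, 0, c, 0, 0, 0, 0, 0, 0, by simp [quad]⟩
    · exact ⟨0, 0, 0, 0, c, 0, 0, 0, 0, 0, by simp [quad]⟩
    · exact ⟨0, 0, 0, 0, 0, c, 0, 0, 0, 0, by simp [quad, mul_assoc]⟩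
    · exact ⟨0, 0, 0, 0, 0, 0, c, 0, 0, 0, by simp [quad]⟩
    · exact ⟨0, 0, 0, 0, 0, 0, 0, c, 0, 0, by simp [quad, mul_assoc]⟩
    · exact ⟨0, 0, 0, 0, 0, 0, 0, 0, c, 0, by simp [quad, mul_assoc]⟩
    · exact ⟨0, 0, 0, 0, 0, 0, 0, 0, 0, c, by simp [quad]⟩

lemma torusF_coeff (a : ℝ) : coeff (Finsupp.single 0 4) (torusF a) = 1 := by
  have h : torusF a = X 0 ^ 4 + X 1 * (X 1 * (2 * X 0 ^ 2 + X 1 ^ 2 - 2 * C (a ^ 2)))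
      + C (-2 * a ^ 2) * X 0 ^ 2 + X 2 * X 2 + C (a ^ 4 - 1) := by
    simp only [torusF, C_sub, C_mul, C_pow, C_neg, map_one, map_ofNat]
    ring
  rw [h]
  simp only [coeff_add, coeff_X_mul', coeff_C_mul, coeff_X_pow, coeff_C]
  have h1 : (1 : Fin 3) ∉ (Finsupp.single (0 : Fin 3) 4).support := by simp
  have h2 : (2 : Fin 3) ∉ (Finsupp.single (0 : Fin 3) 4).support := by simp
  have h3 : ¬ (Finsupp.single (0 : Fin 3) 2 = Finsupp.single (0 : Fin 3) 4) := by
    intro h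
    simpa using DFunLike.congr_fun h 0
  have h4 : ¬ (0 = Finsupp.single (0 : Fin 3) 4) := by
    intro h
    simpa using DFunLike.congr_fun h 0
  simp only [if_neg h1, if_neg h2, if_neg h3, if_neg h4]
  simp

lemma torusF_deg (a : ℝ) : 4 ≤ (torusF a).totalDegree := by
  have h : Finsupp.single 0 4 ∈ (torusF a).support := by
    rw [mem_support_iff, torusF_coeff]; exact one_ne_zero
  simpa using le_totalDegree h

lemma torusF_ne (a : ℝ) : torusF a ≠ 0 := by
  intro h
  have := torusF_coeff a
  simp [h] at this

lemma vf_torus (a : ℝ) (P Q R : MvPolynomial (Fin 3) ℝ) :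
    vf P Q R (torusF a) = 4 * (X 0 ^ 2 + X 1 ^ 2 - C (a ^ 2)) * (X 0 * P + X 1 * Q)
      + 2 * X 2 * R := by
  have h10 : pderiv (R := ℝ) (0 : Fin 3) (X 1) = 0 := pderiv_X_of_ne (by decide)
  have h20 : pderiv (R := ℝ) (0 : Fin 3) (X 2) = 0 := pderiv_X_of_ne (by decide)
  have h01 : pderiv (R := ℝ) (1 : Fin 3) (X 0) = 0 := pderiv_X_of_ne (by decide)
  have h21 : pderiv (R := ℝ) (1 : Fin 3) (X 2) = 0 := pderiv_X_of_ne (by decide)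
  have h02 : pderiv (R := ℝ) (2 : Fin 3) (X 0) = 0 := pderiv_X_of_ne (by decide)
  have h12 : pderiv (R := ℝ) (2 : Fin 3) (X 1) = 0 := pderiv_X_of_ne (by decide)
  simp only [vf, torusF, map_add, map_sub, pderiv_pow, pderiv_C, pderiv_one, pderiv_X_self,
    h10, h20, h01, h21, h02, h12]
  norm_num
  ring

lemma cofactor_deg (a : ℝ) (P Q R K : MvPolynomial (Fin 3) ℝ)
    (hP : P.totalDegree ≤ 2) (hQ : Q.totalDegree ≤ 2) (hR : R.totalDegree ≤ 2)
    (h : vf P Q R (torusF a) = K * torusF a) : K.totalDegree ≤ 1 := by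
  by_cases hK : K = 0
  · simp [hK]
  have h1 : (K * torusF a).totalDegree = K.totalDegree + (torusF a).totalDegree :=
    totalDegree_mul_of_isDomain hK (torusF_ne a)
  have h2 : (vf P Q R (torusF a)).totalDegree ≤ 5 := by
    rw [vf_torus]
    have e4 : (4 : MvPolynomial (Fin 3) ℝ) = C 4 := (map_ofNat C 4).symm
    have e2 : (2 : MvPolynomial (Fin 3) ℝ) = C 2 := (map_ofNat C 2).symm
    have hX : ∀ i : Fin 3, (X i : MvPolynomial (Fin 3) ℝ).totalDegree = 1 :=
      fun i => totalDegree_X i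
    have hX2 : ∀ i : Fin 3, (X i ^ 2 : MvPolynomial (Fin 3) ℝ).totalDegree = 2 :=
      fun i => totalDegree_X_pow i 2
    have a1 : (X 0 ^ 2 + X 1 ^ 2 - C (a ^ 2) : MvPolynomial (Fin 3) ℝ).totalDegree ≤ 2 := by
      refine (totalDegree_sub _ _).trans (max_le ((totalDegree_add _ _).trans (max_le ?_ ?_)) ?_)
      · exact (hX2 0).le
      · exact (hX2 1).le
      · rw [totalDegree_C]; omega
    have a2 : (X 0 * P + X 1 * Q).totalDegree ≤ 3 := by
      refine (totalDegree_add _ _).trans (max_le ?_ ?_)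
      · have := totalDegree_mul (X 0) P
        have := hX 0
        omega
      · have := totalDegree_mul (X 1) Q
        have := hX 1
        omega
    refine (totalDegree_add _ _).trans (max_le ?_ ?_)
    · have b1 := totalDegree_mul (4 * (X 0 ^ 2 + X 1 ^ 2 - C (a ^ 2))) (X 0 * P + X 1 * Q)
      have b2 := totalDegree_mul (4 : MvPolynomial (Fin 3) ℝ) (X 0 ^ 2 + X 1 ^ 2 - C (a ^ 2))
      have b3 : (4 : MvPolynomial (Fin 3) ℝ).totalDegree = 0 := by rw [e4, totalDegree_C]
      omega
    · have b1 := totalDegree_mul (2 * X 2) R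
      have b2 := totalDegree_mul (2 : MvPolynomial (Fin 3) ℝ) (X 2)
      have b3 : (2 : MvPolynomial (Fin 3) ℝ).totalDegree = 0 := by rw [e2, totalDegree_C]
      have := hX 2
      omega
  have h3 := torusF_deg a
  rw [h, h1] at h2
  omega

theorem stmt_10 (a : ℝ) (ha : 1 < a) (P Q R : MvPolynomial (Fin 3) ℝ)
    (hP : P.totalDegree ≤ 2) (hQ : Q.totalDegree ≤ 2) (hR : R.totalDegree ≤ 2)
    (hvf : IsVFOnTorus a P Q R) :
    ∃ (α : ℝ) (f : MvPolynomial (Fin 3) ℝ), f.totalDegree ≤ 1 ∧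
      P = C (α / 4) * X 0 * X 2 + f * X 1 ∧
      Q = C (α / 4) * X 1 * X 2 - f * X 0 ∧
      R = C (α / 2) * (- C (a ^ 2) * (X 0 ^ 2 + X 1 ^ 2) + X 2 ^ 2 + C (a ^ 4 - 1)) := by
  obtain ⟨K, hK⟩ := hvf
  obtain ⟨k0, k1, k2, k3, rfl⟩ := form_one K (cofactor_deg a P Q R K hP hQ hR hK)
  obtain ⟨p0, p1, p2, p3, p4, p5, p6, p7, p8, p9, rfl⟩ := form_two P hP
  obtain ⟨q0, q1, q2, q3, q4, q5, q6, q7, q8, q9, rfl⟩ := form_two Q hQ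
  obtain ⟨r0, r1, r2, r3, r4, r5, r6, r7, r8, r9, rfl⟩ := form_two R hR
  rw [vf_torus] at hK
  have E : ∀ x y z : ℝ, 4 * (x ^ 2 + y ^ 2 - a ^ 2) *
      (x * (p0 + p1 * x + p2 * y + p3 * z + p4 * x ^ 2 + p5 * (x * y) + p6 * y ^ 2
          + p7 * (x * z) + p8 * (y * z) + p9 * z ^ 2)
        + y * (q0 + q1 * x + q2 * y + q3 * z + q4 * x ^ 2 + q5 * (x * y) + q6 * y ^ 2
          + q7 * (x * z) + q8 * (y * z) + q9 * z ^ 2))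
      + 2 * z * (r0 + r1 * x + r2 * y + r3 * z + r4 * x ^ 2 + r5 * (x * y) + r6 * y ^ 2
          + r7 * (x * z) + r8 * (y * z) + r9 * z ^ 2)
      = (k0 + k1 * x + k2 * y + k3 * z) * ((x ^ 2 + y ^ 2 - a ^ 2) ^ 2 + z ^ 2 - 1) := by
    intro x y z
    have := congrArg (eval ![x, y, z]) hK
    simpa [quad, torusF] using this
  clear hK hP hQ hR
  have ha0 : a ≠ 0 := by linarith
  have hk0 : k0 = 0 := by linear_combination (E a 0 0 + E (-a) 0 0) / 2
  have hk1 : k1 = 0 := by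
    have : a * k1 = 0 := by linear_combination (E a 0 0 - E (-a) 0 0) / 2
    simpa [ha0] using this
  have hk2 : k2 = 0 := by
    have : a * k2 = 0 := by linear_combination (E 0 a 0 - E 0 (-a) 0) / 2
    simpa [ha0] using this
  subst hk0 hk1 hk2
  -- the coefficients of `R` at `x = y = 0`
  have A1 := E 0 0 1
  have A2 := E 0 0 (-1)
  have A3 := E 0 0 2
  have hr3 : r3 = 0 := by linear_combination (A1 + A2) / 4
  have hr9 : r9 = k3 / 2 := by linear_combination (A3 / 4 - A1 / 2 - hr3) / 3
  have hr0 : r0 = k3 / 2 * (a ^ 4 - 1) := by linear_combination A1 / 2 - hr3 - hr9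
  subst hr3 hr9 hr0
  clear A1 A2 A3
  have ha2 : a ^ 2 ≠ 0 := pow_ne_zero 2 ha0
  -- the other coefficients of `R`, from points with `x² + y² = a²`
  have hr4 : r4 = -(k3 / 2 * a ^ 2) := by
    apply mul_left_cancel₀ ha2
    linear_combination (E a 0 1 + E (-a) 0 1) / 4
  have hr6 : r6 = -(k3 / 2 * a ^ 2) := by
    apply mul_left_cancel₀ ha2
    linear_combination (E 0 a 1 + E 0 (-a) 1) / 4
  have hr1 : r1 = 0 := by
    apply mul_left_cancel₀ ha0
    linear_combination (E a 0 1 - E (-a) 0 1 - E a 0 (-1) + E (-a) 0 (-1)) / 8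
  have hr7 : r7 = 0 := by
    apply mul_left_cancel₀ ha0
    linear_combination (E a 0 1 - E (-a) 0 1 + E a 0 (-1) - E (-a) 0 (-1)) / 8
  have hr2 : r2 = 0 := by
    apply mul_left_cancel₀ ha0
    linear_combination (E 0 a 1 - E 0 (-a) 1 - E 0 a (-1) + E 0 (-a) (-1)) / 8
  have hr8 : r8 = 0 := by
    apply mul_left_cancel₀ ha0
    linear_combination (E 0 a 1 - E 0 (-a) 1 + E 0 a (-1) - E 0 (-a) (-1)) / 8
  subst hr4 hr6 hr1 hr7 hr2 hr8
  have hr5 : r5 = 0 := by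
    apply mul_left_cancel₀ ha2
    linear_combination (25 / 24) * E (3 * a / 5) (4 * a / 5) 1
  subst hr5
  -- the radial part
  have S : ∀ x y z : ℝ, x ^ 2 + y ^ 2 - a ^ 2 ≠ 0 →
      x * (p0 + p1 * x + p2 * y + p3 * z + p4 * x ^ 2 + p5 * (x * y) + p6 * y ^ 2
          + p7 * (x * z) + p8 * (y * z) + p9 * z ^ 2)
        + y * (q0 + q1 * x + q2 * y + q3 * z + q4 * x ^ 2 + q5 * (x * y) + q6 * y ^ 2
          + q7 * (x * z) + q8 * (y * z) + q9 * z ^ 2) = k3 / 4 * (x ^ 2 + y ^ 2) * z := by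
    intro x y z h
    apply mul_left_cancel₀ h
    linear_combination E x y z / 4
  clear E
  have aux : ∀ c0 c1 c3 c4 c7 c9 : ℝ, (∀ t z : ℝ, t ^ 2 ≠ 1 → t ≠ 0 →
      c0 + c1 * (t * a) + c3 * z + c4 * (t * a) ^ 2 + c7 * (t * a * z) + c9 * z ^ 2 = 0) →
      c0 = 0 ∧ c1 = 0 ∧ c3 = 0 ∧ c4 = 0 ∧ c7 = 0 ∧ c9 = 0 := by
    intro c0 c1 c3 c4 c7 c9 h
    have g0 := h 2 0 (by norm_num) (by norm_num)
    have g1 := h (-2) 0 (by norm_num) (by norm_num)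
    have g2 := h 3 0 (by norm_num) (by norm_num)
    have g3 := h 2 1 (by norm_num) (by norm_num)
    have g4 := h 2 (-1) (by norm_num) (by norm_num)
    have g5 := h (-2) 1 (by norm_num) (by norm_num)
    have g6 := h (-2) (-1) (by norm_num) (by norm_num)
    have e1 : c1 = 0 := by
      apply mul_left_cancel₀ ha0
      linear_combination (g0 - g1) / 4
    have e4 : c4 = 0 := by
      apply mul_left_cancel₀ ha2
      linear_combination (g2 - g0 - a * e1) / 5
    have e0 : c0 = 0 := by linear_combination g0 - 2 * a * e1 - 4 * a ^ 2 * e4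
    have e9 : c9 = 0 := by linear_combination (g3 + g4) / 2 - g0
    have e3 : c3 = 0 := by linear_combination (g3 - g4 + g5 - g6) / 4
    have e7 : c7 = 0 := by
      apply mul_left_cancel₀ ha0
      linear_combination (g3 - g4 - g5 + g6) / 8
    exact ⟨e0, e1, e3, e4, e7, e9⟩
  have nz : ∀ t : ℝ, t ^ 2 ≠ 1 → (t * a) ^ 2 - a ^ 2 ≠ 0 := by
    intro t ht h
    have : (t ^ 2 - 1) * a ^ 2 = 0 := by linear_combination h
    rcases mul_eq_zero.mp this with h | h
    · exact ht (by linarith)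
    · exact ha2 h
  obtain ⟨rfl, rfl, rfl, rfl, hp7, rfl⟩ := aux p0 p1 p3 p4 (p7 - k3 / 4) p9 (by
    intro t z h1 h0
    apply mul_left_cancel₀ (mul_ne_zero h0 ha0)
    linear_combination S (t * a) 0 z (by simpa using nz t h1))
  obtain ⟨rfl, rfl, rfl, rfl, hq8, rfl⟩ := aux q0 q2 q3 q6 (q8 - k3 / 4) q9 (by
    intro t z h1 h0
    apply mul_left_cancel₀ (mul_ne_zero h0 ha0)
    linear_combination S 0 (t * a) z (by simpa using nz t h1))
  obtain rfl : p7 = k3 / 4 := by linarith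
  obtain rfl : q8 = k3 / 4 := by linarith
  have L : ∀ s t z : ℝ, s ^ 2 = 4 → t ^ 2 = 4 →
      (p2 + q1) + (p5 + q4) * (s * a) + (p6 + q5) * (t * a) + (p8 + q7) * z = 0 := by
    intro s t z hs ht
    have hs0 : s ≠ 0 := by rintro rfl; norm_num at hs
    have ht0 : t ≠ 0 := by rintro rfl; norm_num at ht
    apply mul_left_cancel₀ (mul_ne_zero (mul_ne_zero hs0 ha0) (mul_ne_zero ht0 ha0))
    have hne : (s * a) ^ 2 + (t * a) ^ 2 - a ^ 2 ≠ 0 := by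
      rw [mul_pow, mul_pow, hs, ht]
      intro h
      apply ha2
      linarith
    linear_combination S (s * a) (t * a) z hne
  have l1 := L 2 2 0 (by norm_num) (by norm_num)
  have l2 := L (-2) 2 0 (by norm_num) (by norm_num)
  have l3 := L 2 (-2) 0 (by norm_num) (by norm_num)
  have l4 := L 2 2 1 (by norm_num) (by norm_num)
  obtain rfl : q4 = -p5 := by
    apply mul_left_cancel₀ ha0
    linear_combination (l1 - l2) / 4
  obtain rfl : q5 = -p6 := by
    apply mul_left_cancel₀ ha0
    linear_combination (l1 - l3) / 4
  obtain rfl : q7 = -p8 := by linear_combination l4 - l1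
  obtain rfl : q1 = -p2 := by linear_combination l1
  refine ⟨k3, C p2 + C p5 * X 0 + C p6 * X 1 + C p8 * X 2, ?_, ?_, ?_, ?_⟩
  · have hl : ∀ (c : ℝ) (i : Fin 3), (C c * X i : MvPolynomial (Fin 3) ℝ).totalDegree ≤ 1 := by
      intro c i
      refine (totalDegree_mul _ _).trans ?_
      rw [totalDegree_C, totalDegree_X]
    refine (totalDegree_add _ _).trans (max_le ((totalDegree_add _ _).trans
      (max_le ((totalDegree_add _ _).trans (max_le ?_ (hl _ _))) (hl _ _))) (hl _ _))
    simp
  · simp only [quad, C_0]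
    ring
  · simp only [quad, C_0, C_neg]
    ring
  · simp only [quad, C_0, C_neg, C_mul, C_sub, C_1]
    ring
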